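/- arXiv:2408.13713 — 9 statements merged into one kernel-verified Lean document; each statement's English description precedes it below -/
import Mathlib

section
/- Let m, a, b, c be natural numbers with b ≤ a, c ≤ a, and a ≤ 2m. Then, as real numbers, binom(2m, a) / binom(3m, a) ≤ (2/3)^((a + b + c)/3), where the exponent (a + b + c)/3 is a real number and the power is the real power function. -/
theorem aux_choose_pow (m a : ℕ) :
    3 ^ a * (2 * m).choose a ≤ 2 ^ a * (3 * m).choose a := by
  induction a with
  | zero => simp
  | succ k ih =>
    have h1 := Nat.choose_succ_right_eq (2 * m) k
    have h2 := Nat.choose_succ_right_eq (3 * m) k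
    have h3 : 3 * (2 * m - k) ≤ 2 * (3 * m - k) := by omega
    refine Nat.le_of_mul_le_mul_right (c := k + 1) ?_ (Nat.succ_pos k)
    calc 3 ^ (k + 1) * (2 * m).choose (k + 1) * (k + 1)
        = 3 ^ (k + 1) * ((2 * m).choose (k + 1) * (k + 1)) := by ring
      _ = (3 ^ k * (2 * m).choose k) * (3 * (2 * m - k)) := by rw [h1]; ring
      _ ≤ (2 ^ k * (3 * m).choose k) * (2 * (3 * m - k)) := Nat.mul_le_mul ih h3
      _ = 2 ^ (k + 1) * ((3 * m).choose (k + 1) * (k + 1)) := by rw [h2]; ring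
      _ = _ := by ring

theorem binom_ratio_rpow_two_thirds (m a b c : ℕ) (hb : b ≤ a) (hc : c ≤ a)
    (ha : a ≤ 2 * m) :
    ((2 * m).choose a : ℝ) / ((3 * m).choose a : ℝ) ≤
      ((2 : ℝ) / 3) ^ (((a : ℝ) + b + c) / 3) := by
  have hpos : (0 : ℝ) < ((3 * m).choose a : ℝ) := by
    exact_mod_cast Nat.choose_pos (by omega : a ≤ 3 * m)
  have h : (3 : ℝ) ^ a * ((2 * m).choose a : ℝ) ≤ 2 ^ a * ((3 * m).choose a : ℝ) := by
    exact_mod_cast aux_choose_pow m a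
  have hb' : (b : ℝ) ≤ a := by exact_mod_cast hb
  have hc' : (c : ℝ) ≤ a := by exact_mod_cast hc
  calc ((2 * m).choose a : ℝ) / ((3 * m).choose a : ℝ) ≤ ((2 : ℝ) / 3) ^ a := by
        rw [div_pow, div_le_div_iff₀ hpos (by positivity)]
        linarith
    _ = ((2 : ℝ) / 3) ^ (a : ℝ) := (Real.rpow_natCast _ _).symm
    _ ≤ _ := Real.rpow_le_rpow_of_exponent_ge (by norm_num) (by norm_num) (by linarith)
end

section
/- Let m, a, b, c be natural numbers with a ≤ c, b ≤ c, and c ≤ m. Then, as real numbers, binom(m, c) / binom(3m, c) ≤ (1/3)^((a + b + c)/3), where the exponent (a + b + c)/3 is a real number and the power is the real power function. -/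
theorem three_pow_mul_choose_le (m c : ℕ) : 3 ^ c * m.choose c ≤ (3 * m).choose c := by
  induction c with
  | zero => simp
  | succ k ih =>
    have h1 := Nat.choose_succ_right_eq m k
    have h2 := Nat.choose_succ_right_eq (3 * m) k
    have h3 : 3 * (m - k) ≤ 3 * m - k := by omega
    refine Nat.le_of_mul_le_mul_right ?_ (Nat.succ_pos k)
    calc 3 ^ (k + 1) * m.choose (k + 1) * (k + 1)
        = 3 ^ (k + 1) * (m.choose (k + 1) * (k + 1)) := by ring
      _ = (3 ^ k * m.choose k) * (3 * (m - k)) := by rw [h1]; ring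
      _ ≤ (3 * m).choose k * (3 * m - k) := Nat.mul_le_mul ih h3
      _ = (3 * m).choose (k + 1) * (k + 1) := h2.symm

theorem binom_ratio_rpow_one_third (m a b c : ℕ) (ha : a ≤ c) (hb : b ≤ c)
    (hc : c ≤ m) :
    ((m.choose c : ℝ)) / (((3 * m).choose c : ℝ)) ≤
      ((1 : ℝ) / 3) ^ (((a : ℝ) + b + c) / 3) := by
  have hpos : (0 : ℝ) < ((3 * m).choose c : ℝ) := by
    exact_mod_cast Nat.choose_pos (by omega)
  have key : (3 : ℝ) ^ c * (m.choose c : ℝ) ≤ ((3 * m).choose c : ℝ) := by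
    exact_mod_cast three_pow_mul_choose_le m c
  have ha' : (a : ℝ) ≤ c := by exact_mod_cast ha
  have hb' : (b : ℝ) ≤ c := by exact_mod_cast hb
  calc ((m.choose c : ℝ)) / (((3 * m).choose c : ℝ)) ≤ ((1 : ℝ) / 3) ^ c := by
        rw [div_le_iff₀ hpos, one_div, inv_pow, ← div_eq_inv_mul, le_div_iff₀ (by positivity)]
        linarith
    _ = ((1 : ℝ) / 3) ^ (c : ℝ) := (Real.rpow_natCast _ _).symm
    _ ≤ _ := Real.rpow_le_rpow_of_exponent_ge (by norm_num) (by norm_num) (by linarith)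
end

section
/- Let θ : ℝ and s₀ ∈ {0, 1}. Let Bell = (e₀ ⊗ₖ e₀ + e₁ ⊗ₖ e₁)/√2 ∈ ℂ⁴ and let v = (e₀ + (-1)^{s₀} · exp(-I·θ) · e₁)/√2 ∈ ℂ². Then applying the partial contraction (vᴴ ⊗ I) to Bell yields (exp(I·θ/2)/√2) • (Z^{s₀} · R_Z(θ)) |+⟩; in particular, up to the global phase exp(I·θ/2) and normalization 1/√2, the unmeasured half of the Bell pair is in the state Z^{s₀} R_Z(θ) |+⟩. -/
open Matrix Kronecker Complex

noncomputable section

/-- Pauli X -/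
def X2 : Matrix (Fin 2) (Fin 2) ℂ := !![0, 1; 1, 0]

/-- Pauli Z -/
def Z2 : Matrix (Fin 2) (Fin 2) ℂ := !![1, 0; 0, -1]

/-- Hadamard -/
def H2 : Matrix (Fin 2) (Fin 2) ℂ := (1 / (Real.sqrt 2 : ℂ)) • !![1, 1; 1, -1]

/-- Z-rotation R_Z(φ) -/
def RZ (φ : ℝ) : Matrix (Fin 2) (Fin 2) ℂ :=
  !![Complex.exp (-(Complex.I * φ / 2)), 0; 0, Complex.exp (Complex.I * φ / 2)]

/-- standard basis vector of ℂ² -/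
def e (i : Fin 2) : Fin 2 → ℂ := fun j => if j = i then 1 else 0

/-- Kronecker (tensor) product of two qubit state vectors -/
def tensorVec (a b : Fin 2 → ℂ) : Fin 2 × Fin 2 → ℂ := fun p => a p.1 * b p.2

/-- partial contraction (vᴴ ⊗ I) : ℂ⁴ → ℂ², (vᴴ ⊗ I)(a ⊗ₖ b) = ⟨v,a⟩ • b -/
def contractL (v : Fin 2 → ℂ) (u : Fin 2 × Fin 2 → ℂ) : Fin 2 → ℂ :=
  fun j => ∑ i, (starRingEnd ℂ) (v i) * u (i, j)

/-- partial contraction (I ⊗ wᴴ) : ℂ⁴ → ℂ², (I ⊗ wᴴ)(a ⊗ₖ b) = ⟨w,b⟩ • a -/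
def contractR (w : Fin 2 → ℂ) (u : Fin 2 × Fin 2 → ℂ) : Fin 2 → ℂ :=
  fun i => ∑ j, (starRingEnd ℂ) (w j) * u (i, j)

/-- controlled-NOT with the first factor as control -/
def CX : Matrix (Fin 2 × Fin 2) (Fin 2 × Fin 2) ℂ :=
  fun p q => if p.1 = q.1 ∧ p.2 = q.1 + q.2 then 1 else 0

/-- Eq. (5): measuring one half of a Bell pair in the basis M(-θ) with outcome s₀
leaves the other half in the state Z^{s₀} R_Z(θ)|+⟩, up to global phase exp(Iθ/2)
and the normalization 1/√2. -/
theorem bell_half_state (θ : ℝ) (s₀ : ℕ) (hs₀ : s₀ ≤ 1) :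
    contractL
      ((1 / (Real.sqrt 2 : ℂ)) •
        (e 0 + ((-1 : ℂ) ^ s₀ * Complex.exp (-(Complex.I * θ))) • e 1))
      ((1 / (Real.sqrt 2 : ℂ)) • (tensorVec (e 0) (e 0) + tensorVec (e 1) (e 1)))
    = (Complex.exp (Complex.I * θ / 2) / (Real.sqrt 2 : ℂ)) •
        (Z2 ^ s₀ * RZ θ).mulVec ((1 / (Real.sqrt 2 : ℂ)) • (e 0 + e 1)) := by
  have hc : (starRingEnd ℂ) (Complex.exp (-(Complex.I * θ)))
      = Complex.exp (Complex.I * θ / 2) * Complex.exp (Complex.I * θ / 2) := by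
    rw [← Complex.exp_conj, ← Complex.exp_add]
    congr 1
    simp only [map_neg, map_mul, Complex.conj_I, Complex.conj_ofReal]
    ring
  have hn : Complex.exp (Complex.I * θ / 2) * Complex.exp (-(Complex.I * θ / 2)) = 1 := by
    rw [← Complex.exp_add, add_neg_cancel, Complex.exp_zero]
  interval_cases s₀ <;> ext j <;> fin_cases j <;>
    simp [contractL, tensorVec, e, Z2, RZ, Matrix.mulVec, dotProduct, Fin.sum_univ_two,
      Matrix.mul_apply, -mul_eq_mul_left_iff, -mul_eq_mul_right_iff,
      hc, Complex.conj_ofReal]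
  all_goals first
    | linear_combination (-((Real.sqrt 2 : ℂ)⁻¹ * (Real.sqrt 2 : ℂ)⁻¹)) * hn
    | ring
end
end

section
/- As an identity of 2×2 complex matrices, (1/16) · Σ_{s₀=0}^{1} Σ_{k=0}^{7} (Z^{s₀} · R_Z(kπ/4)) · |+⟩⟨+| · (Z^{s₀} · R_Z(kπ/4))ᴴ = (1/2) • 1, where |+⟩⟨+| = (1/2)•!![1,1;1,1] and 1 is the identity matrix. -/
open Matrix Kronecker Complex

noncomputable section

/-- For a fixed angle the two `s₀` branches already add up to the identity. -/
theorem blindness_aux (φ : ℝ) :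
    (Z2 ^ 0 * RZ φ) * ((1 / 2 : ℂ) • !![1, 1; 1, 1]) * (Z2 ^ 0 * RZ φ)ᴴ +
      (Z2 ^ 1 * RZ φ) * ((1 / 2 : ℂ) • !![1, 1; 1, 1]) * (Z2 ^ 1 * RZ φ)ᴴ
    = (1 : Matrix (Fin 2) (Fin 2) ℂ) := by
  have h1 : Complex.exp (-(Complex.I * φ / 2)) * Complex.exp (Complex.I * φ / 2) = 1 := by
    rw [← Complex.exp_add]; simp
  have h2 : (starRingEnd ℂ) (Complex.exp (Complex.I * φ / 2))
      = Complex.exp (-(Complex.I * φ / 2)) := by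
    rw [← Complex.exp_conj]; congr 1; simp [Complex.conj_ofNat]; ring
  have h3 : (starRingEnd ℂ) (Complex.exp (-(Complex.I * φ / 2)))
      = Complex.exp (Complex.I * φ / 2) := by
    rw [← h2, Complex.conj_conj]
  unfold RZ Z2
  generalize Complex.exp (-(Complex.I * φ / 2)) = a at *
  generalize Complex.exp (Complex.I * φ / 2) = b at *
  ext i j
  fin_cases i <;> fin_cases j <;>
    simp [Matrix.vecMul, dotProduct, Fin.sum_univ_two, Matrix.conjTranspose_apply, h2, h3] <;>
    first | linear_combination h1 | ring

/-- Eq. (12), input blindness: averaging Z^{s₀} R_Z(kπ/4) |+⟩⟨+| (Z^{s₀} R_Z(kπ/4))ᴴ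
over s₀ ∈ {0,1} and k ∈ {0,…,7} gives the maximally mixed state I/2. -/
theorem input_blindness :
    (1 / 16 : ℂ) •
      ∑ s₀ ∈ Finset.range 2, ∑ k ∈ Finset.range 8,
        (Z2 ^ s₀ * RZ ((k : ℝ) * Real.pi / 4)) * ((1 / 2 : ℂ) • !![1, 1; 1, 1]) *
          (Z2 ^ s₀ * RZ ((k : ℝ) * Real.pi / 4))ᴴ
    = (1 / 2 : ℂ) • (1 : Matrix (Fin 2) (Fin 2) ℂ) := by
  rw [Finset.sum_comm]
  simp only [Finset.sum_range_succ _ 1, Finset.sum_range_one, blindness_aux]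
  rw [Finset.sum_const, Finset.card_range, ← Nat.cast_smul_eq_nsmul ℂ, smul_smul]
  norm_num
end
end

section
/- Let ψ ∈ ℂ², θ : ℝ, and s₁ ∈ {0, 1}. Let v_θ = (e₀ + exp(I·θ) · e₁)/√2 ∈ ℂ². Then applying the partial contraction (I ⊗ e_{s₁}ᴴ) to the vector (H ⊗ₖ 1) · CX · (ψ ⊗ₖ v_θ) ∈ ℂ⁴ yields (exp(I·θ/2)/√2) • (H · R_Z((-1)^{s₁} · θ)) ψ. -/
open Matrix Kronecker Complex

noncomputable section

/-- Eqs. (15)–(16): coupling the register ψ with an ancilla in state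
(e₀ + e^{iθ}e₁)/√2 via (H ⊗ 1)·CX and projecting the ancilla onto the Z-basis
outcome s₁ leaves the register in H R_Z((-1)^{s₁}θ) ψ, up to global phase
exp(Iθ/2) and normalization 1/√2. -/
theorem first_coupling_step (ψ : Fin 2 → ℂ) (θ : ℝ) (s₁ : Fin 2) :
    contractR (e s₁)
      (((H2 ⊗ₖ (1 : Matrix (Fin 2) (Fin 2) ℂ)) * CX).mulVec
        (tensorVec ψ ((1 / (Real.sqrt 2 : ℂ)) • (e 0 + Complex.exp (Complex.I * θ) • e 1))))
    = (Complex.exp (Complex.I * θ / 2) / (Real.sqrt 2 : ℂ)) •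
        (H2 * RZ ((-1 : ℝ) ^ (s₁ : ℕ) * θ)).mulVec ψ := by
  have h1 : Complex.exp (Complex.I * θ) =
      Complex.exp (Complex.I * θ / 2) * Complex.exp (Complex.I * θ / 2) := by
    rw [← Complex.exp_add]; congr 1; ring
  have h2 : Complex.exp (-(Complex.I * θ / 2)) = (Complex.exp (Complex.I * θ / 2))⁻¹ :=
    Complex.exp_neg _
  have h3 : Complex.exp (-(Complex.I * θ) / 2) = (Complex.exp (Complex.I * θ / 2))⁻¹ := by
    rw [← h2]; congr 1; ring
  have h4 : Complex.exp (-(-(Complex.I * θ) / 2)) = Complex.exp (Complex.I * θ / 2) := by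
    congr 1; ring
  have hu : Complex.exp (Complex.I * θ / 2) ≠ 0 := Complex.exp_ne_zero _
  have hs : (Real.sqrt 2 : ℂ) ≠ 0 := by
    simp
  rw [h1]
  funext i
  fin_cases s₁ <;> fin_cases i <;>
    simp [contractR, e, H2, RZ, CX, tensorVec, Matrix.mulVec, dotProduct, Matrix.mul_apply,
      Fintype.sum_prod_type, Fin.sum_univ_two, Matrix.one_apply, Matrix.kroneckerMap_apply,
      h2, h3, h4] <;>
    generalize Complex.exp (Complex.I * θ / 2) = u at * <;>
    field_simp <;> try ring
end
end

section
/- Let ψ ∈ ℂ², φ' : ℝ, and s₃ ∈ {0, 1}. Let w = (e₀ + (-1)^{s₃} · exp(I·φ') · e₁)/√2 ∈ ℂ². Then applying the partial contraction (I ⊗ wᴴ) to the vector (H ⊗ₖ 1) · CX · (ψ ⊗ₖ e₀) ∈ ℂ⁴ yields (exp(-I·φ'/2)/√2) • (X^{s₃} · H · R_Z(-φ')) ψ. -/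
open Matrix Kronecker Complex

noncomputable section

/-- Eqs. (17)–(18): coupling the register ψ with an ancilla in state e₀ via
(H ⊗ 1)·CX and projecting the ancilla onto the M(φ') basis element with outcome
s₃ leaves the register in X^{s₃} H R_Z(-φ') ψ, up to global phase exp(-Iφ'/2)
and normalization 1/√2. -/
theorem last_coupling_step (ψ : Fin 2 → ℂ) (φ' : ℝ) (s₃ : ℕ) (hs₃ : s₃ ≤ 1) :
    contractR
      ((1 / (Real.sqrt 2 : ℂ)) •
        (e 0 + ((-1 : ℂ) ^ s₃ * Complex.exp (Complex.I * φ')) • e 1))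
      (((H2 ⊗ₖ (1 : Matrix (Fin 2) (Fin 2) ℂ)) * CX).mulVec (tensorVec ψ (e 0)))
    = (Complex.exp (-(Complex.I * φ' / 2)) / (Real.sqrt 2 : ℂ)) •
        (X2 ^ s₃ * H2 * RZ (-φ')).mulVec ψ := by
  have h1 : Complex.exp (-(Complex.I * φ' / 2)) * Complex.exp (Complex.I * φ' / 2) = 1 := by
    rw [← Complex.exp_add]; simp
  have h2 : Complex.exp (-(Complex.I * φ'))
      = Complex.exp (-(Complex.I * φ' / 2)) * Complex.exp (-(Complex.I * φ' / 2)) := by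
    rw [← Complex.exp_add]; congr 1; ring
  have h3 : (starRingEnd ℂ) (Complex.exp (Complex.I * φ')) = Complex.exp (-(Complex.I * φ')) := by
    rw [← Complex.exp_conj]; simp
  have r1 : RZ (-φ') = !![Complex.exp (Complex.I * φ' / 2), 0;
      0, Complex.exp (-(Complex.I * φ' / 2))] := by
    unfold RZ
    congr 3 <;> simp [neg_div]
  rw [r1]
  generalize Complex.exp (Complex.I * φ' / 2) = b at *
  generalize Complex.exp (-(Complex.I * φ' / 2)) = a at *
  generalize Complex.exp (Complex.I * φ') = c at *
  rw [h2] at h3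
  interval_cases s₃ <;> ext i <;> fin_cases i <;>
    simp [contractR, e, tensorVec, CX, H2, X2, Matrix.mulVec, dotProduct, Matrix.mul_apply,
      Fintype.sum_prod_type, Fin.sum_univ_two, Matrix.one_apply, h3] <;>
    linear_combination (-(((Real.sqrt 2 : ℝ) : ℂ)⁻¹ * ((Real.sqrt 2 : ℝ) : ℂ)⁻¹ * ψ 0)) * h1
end
end

section
/- For every φ : ℝ, r ∈ {0, 1}, and s ∈ {0, 1}, one has the 2×2 matrix identity X^{s} · H · R_Z(φ - r·π) = I^r • (X^{(s + r) % 2} · H · R_Z(φ)), where I = Complex.I on the right-hand side is the imaginary unit acting as a global phase. -/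
open Matrix Kronecker Complex

noncomputable section

/-- Shifting the angle by `π` gives `i` times an extra Pauli Z. -/
lemma RZ_sub_pi (φ : ℝ) : RZ (φ - Real.pi) = Complex.I • (Z2 * RZ φ) := by
  have h1 : Complex.exp (-(Complex.I * ((φ - Real.pi : ℝ) : ℂ) / 2))
      = Complex.I * Complex.exp (-(Complex.I * φ / 2)) := by
    rw [show -(Complex.I * ((φ - Real.pi : ℝ) : ℂ) / 2)
      = (Real.pi : ℂ) / 2 * Complex.I + -(Complex.I * φ / 2) by push_cast; ring,
      Complex.exp_add, Complex.exp_pi_div_two_mul_I]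
  have h2 : Complex.exp (Complex.I * ((φ - Real.pi : ℝ) : ℂ) / 2)
      = -Complex.I * Complex.exp (Complex.I * φ / 2) := by
    rw [show Complex.I * ((φ - Real.pi : ℝ) : ℂ) / 2
      = -(Real.pi : ℂ) / 2 * Complex.I + Complex.I * φ / 2 by push_cast; ring,
      Complex.exp_add, Complex.exp_neg_pi_div_two_mul_I]
  unfold RZ
  rw [h1, h2]
  ext i j
  fin_cases i <;> fin_cases j <;> simp [Z2, Matrix.mul_apply, Fin.sum_univ_two]

lemma H2_mul_Z2 : H2 * Z2 = X2 * H2 := by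
  ext i j
  fin_cases i <;> fin_cases j <;> simp [H2, X2, Z2, Matrix.mul_apply, Fin.sum_univ_two]

lemma X2_mul_X2 : X2 * X2 = 1 := by
  ext i j
  fin_cases i <;> fin_cases j <;> simp [X2, Matrix.mul_apply, Fin.sum_univ_two]

/-- Eq. (19), byproduct absorption: X^{s} H R_Z(φ - rπ) = i^r • X^{s⊕r} H R_Z(φ). -/
theorem byproduct_absorption (φ : ℝ) (r s : ℕ) (hr : r ≤ 1) (hs : s ≤ 1) :
    X2 ^ s * H2 * RZ (φ - (r : ℝ) * Real.pi)
      = Complex.I ^ r • (X2 ^ ((s + r) % 2) * H2 * RZ φ) := by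
  have key : H2 * RZ (φ - Real.pi) = Complex.I • (X2 * H2 * RZ φ) := by
    rw [RZ_sub_pi, Matrix.mul_smul, ← Matrix.mul_assoc, H2_mul_Z2]
  interval_cases r
  · interval_cases s <;> simp
  · interval_cases s
    · simpa using key
    · have h : X2 * (X2 * H2 * RZ φ) = H2 * RZ φ := by
        rw [← Matrix.mul_assoc, ← Matrix.mul_assoc, X2_mul_X2, Matrix.one_mul]
      simp [Matrix.mul_assoc X2 H2 (RZ (φ - Real.pi)), key, h]
end
end

section
/- Let φ, θ : ℝ and s₁, s₃, r ∈ {0, 1}, and set φ' = -φ + (-1)^{s₁}·θ + r·π. Then the 2×2 matrix identity X^{s₃} · H · R_Z((-1)^{s₁}·θ - φ') = I^r • (X^{(s₃ + r) % 2} · H · R_Z(φ)) holds, where I = Complex.I is the imaginary unit acting as a global phase. -/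
open Matrix Kronecker Complex

noncomputable section

/-- Eq. (19), correctness of the angle encryption: with
φ' = -φ + (-1)^{s₁}θ + rπ, the operation X^{s₃} H R_Z((-1)^{s₁}θ - φ') equals
J(φ) = H R_Z(φ) up to the Pauli byproduct X^{s₃⊕r} and a global phase i^r. -/
theorem angle_encryption_correct (φ θ : ℝ) (s₁ s₃ r : ℕ)
    (hs₁ : s₁ ≤ 1) (hs₃ : s₃ ≤ 1) (hr : r ≤ 1)
    (φ' : ℝ) (hφ' : φ' = -φ + (-1 : ℝ) ^ s₁ * θ + (r : ℝ) * Real.pi) :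
    X2 ^ s₃ * H2 * RZ ((-1 : ℝ) ^ s₁ * θ - φ')
      = Complex.I ^ r • (X2 ^ ((s₃ + r) % 2) * H2 * RZ φ) := by
  have harg : (-1 : ℝ) ^ s₁ * θ - φ' = φ - (r : ℝ) * Real.pi := by rw [hφ']; ring
  rw [harg]
  have hRZ : RZ (φ - Real.pi) = Complex.I • (Z2 * RZ φ) := by
    have h1 : Complex.exp (-(Complex.I * ((φ - Real.pi : ℝ) : ℂ) / 2))
        = Complex.I * Complex.exp (-(Complex.I * φ / 2)) := by
      rw [show -(Complex.I * ((φ - Real.pi : ℝ) : ℂ) / 2)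
        = (Real.pi : ℂ) / 2 * Complex.I + -(Complex.I * φ / 2) by push_cast; ring,
        Complex.exp_add, Complex.exp_pi_div_two_mul_I]
    have h2 : Complex.exp (Complex.I * ((φ - Real.pi : ℝ) : ℂ) / 2)
        = -Complex.I * Complex.exp (Complex.I * φ / 2) := by
      rw [show Complex.I * ((φ - Real.pi : ℝ) : ℂ) / 2
        = -(Real.pi : ℂ) / 2 * Complex.I + Complex.I * φ / 2 by push_cast; ring,
        Complex.exp_add, Complex.exp_neg_pi_div_two_mul_I]
    unfold RZ
    rw [h1, h2]
    ext i j
    fin_cases i <;> fin_cases j <;> simp [Z2]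
  have hHZ : H2 * Z2 = X2 * H2 := by
    ext i j
    fin_cases i <;> fin_cases j <;> simp [H2, Z2, X2]
  have hXX : X2 * X2 = 1 := by
    ext i j
    fin_cases i <;> fin_cases j <;> simp [X2]
  have hr' : r = 0 ∨ r = 1 := by omega
  have hs' : s₃ = 0 ∨ s₃ = 1 := by omega
  rcases hr' with rfl | rfl
  · rcases hs' with rfl | rfl <;> simp
  · have key : H2 * RZ (φ - Real.pi) = Complex.I • (X2 * H2 * RZ φ) := by
      rw [hRZ, Matrix.mul_smul, ← Matrix.mul_assoc, hHZ]
    rcases hs' with rfl | rfl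
    · simpa using key
    · have : X2 * (H2 * RZ (φ - Real.pi)) = Complex.I • (H2 * RZ φ) := by
        rw [key, Matrix.mul_smul, ← Matrix.mul_assoc, ← Matrix.mul_assoc, hXX, Matrix.one_mul]
      simpa [Matrix.mul_assoc] using this
end
end

section
/- For every 2×2 complex unitary matrix U (Uᴴ · U = 1), there exist δ, φ₁, φ₂, φ₃ : ℝ such that U = exp(I·δ) • ((H · R_Z(φ₁)) · (H · R_Z(φ₂)) · (H · R_Z(φ₃))); that is, every single-qubit unitary equals a product of three J(φ) = H R_Z(φ) operators up to a global phase. -/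
open Matrix Kronecker Complex

noncomputable section

lemma H2_mul_H2 : H2 * H2 = 1 := by
  have h : ((Real.sqrt 2 : ℝ) : ℂ) * (Real.sqrt 2 : ℝ) = 2 := by
    rw [← Complex.ofReal_mul, Real.mul_self_sqrt (by norm_num)]; norm_num
  have h0 : ((Real.sqrt 2 : ℝ) : ℂ) ≠ 0 := by
    intro h'; rw [h'] at h; norm_num at h
  ext i j
  fin_cases i <;> fin_cases j <;> simp [H2, Matrix.mul_apply, Fin.sum_univ_two] <;>
    field_simp <;> linear_combination (-1) * h

lemma H2_conj : H2ᴴ = H2 := by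
  ext i j
  fin_cases i <;> fin_cases j <;> simp [H2, Matrix.conjTranspose_apply]

lemma H_RZ_H (θ : ℝ) : H2 * RZ (2 * θ) * H2 =
    !![(Real.cos θ : ℂ), -Complex.I * Real.sin θ; -Complex.I * Real.sin θ, (Real.cos θ : ℂ)] := by
  have h : ((Real.sqrt 2 : ℝ) : ℂ) * (Real.sqrt 2 : ℝ) = 2 := by
    rw [← Complex.ofReal_mul, Real.mul_self_sqrt (by norm_num)]; norm_num
  have h2 : (((Real.sqrt 2 : ℝ) : ℂ))⁻¹ * (((Real.sqrt 2 : ℝ) : ℂ))⁻¹ = 1 / 2 := by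
    rw [← mul_inv, h]; norm_num
  have e1 : Complex.exp (Complex.I * ((2 * θ : ℝ) : ℂ) / 2)
      = Complex.cos θ + Complex.sin θ * Complex.I := by
    rw [← Complex.exp_mul_I]; congr 1; push_cast; ring
  have e2 : Complex.exp (-(Complex.I * ((2 * θ : ℝ) : ℂ) / 2))
      = Complex.cos θ - Complex.sin θ * Complex.I := by
    have := Complex.exp_mul_I (-(θ : ℂ))
    rw [Complex.cos_neg, Complex.sin_neg] at this
    rw [show -(Complex.I * ((2 * θ : ℝ) : ℂ) / 2) = -(θ : ℂ) * Complex.I by push_cast; ring, this]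
    ring
  unfold RZ
  rw [e1, e2]
  ext i j
  fin_cases i <;> fin_cases j <;>
    simp [H2, Matrix.mul_apply, Fin.sum_univ_two]
  · linear_combination (2 * Complex.cos θ) * h2
  · linear_combination (-2 * Complex.I * Complex.sin θ) * h2
  · linear_combination (-2 * Complex.I * Complex.sin θ) * h2
  · linear_combination (2 * Complex.cos θ) * h2

lemma zxz (W : Matrix (Fin 2) (Fin 2) ℂ) (hW : Wᴴ * W = 1) :
    ∃ δ φ₁ φ₂ φ₃ : ℝ,
      W = Complex.exp (Complex.I * δ) • (RZ φ₁ * (H2 * RZ φ₂ * H2) * RZ φ₃) := by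
  have key : ∀ i j, (Wᴴ * W) i j = (1 : Matrix (Fin 2) (Fin 2) ℂ) i j := by rw [hW]; simp
  have k00 := key 0 0
  have k01 := key 0 1
  have k11 := key 1 1
  simp [Matrix.mul_apply, Fin.sum_univ_two] at k00 k01 k11
  obtain ⟨p, hp⟩ : ∃ p, p = W 0 0 := ⟨_, rfl⟩
  obtain ⟨q, hq⟩ : ∃ p, p = W 0 1 := ⟨_, rfl⟩
  obtain ⟨r, hr⟩ : ∃ p, p = W 1 0 := ⟨_, rfl⟩
  obtain ⟨t, ht⟩ : ∃ p, p = W 1 1 := ⟨_, rfl⟩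
  rw [← hp, ← hr] at k00
  rw [← hp, ← hq, ← hr, ← ht] at k01
  rw [← hq, ← ht] at k11
  obtain ⟨D, hD⟩ : ∃ D, D = p * t - q * r := ⟨_, rfl⟩
  have hq' : q = -D * (starRingEnd ℂ) r := by
    rw [hD]; linear_combination (-q) * k00 + p * k01
  have ht' : t = D * (starRingEnd ℂ) p := by
    rw [hD]; linear_combination (-t) * k00 + r * k01
  have hDn : ‖D‖ = 1 := by
    have h1 : (starRingEnd ℂ) D * D = 1 := by
      rw [hq', ht'] at k11
      simp at k11
      linear_combination k11 - (starRingEnd ℂ) D * D * k00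
    have h2 : ‖D‖ * ‖D‖ = 1 := by
      have := congrArg norm h1
      simpa using this
    nlinarith [norm_nonneg D]
  have hn : ‖p‖ ^ 2 + ‖r‖ ^ 2 = 1 := by
    rw [Complex.conj_mul', Complex.conj_mul'] at k00
    exact_mod_cast k00
  have hpe := Complex.norm_mul_exp_arg_mul_I p
  have hre := Complex.norm_mul_exp_arg_mul_I r
  have hDe := Complex.norm_mul_exp_arg_mul_I D
  rw [hDn] at hDe
  have hc : Real.cos (Real.arccos ‖p‖) = ‖p‖ :=
    Real.cos_arccos (by linarith [norm_nonneg p]) (by nlinarith [norm_nonneg p, sq_nonneg ‖r‖])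
  have hs : Real.sin (Real.arccos ‖p‖) = ‖r‖ := by
    rw [Real.sin_arccos, ← hn, add_sub_cancel_left, Real.sqrt_sq (norm_nonneg r)]
  generalize Real.arccos ‖p‖ = θ at hc hs
  generalize Complex.arg p = α at hpe
  generalize Complex.arg r = β at hre
  generalize Complex.arg D = γ at hDe
  rw [← hc] at hpe
  rw [← hs] at hre
  have hpc : (starRingEnd ℂ) p = (Real.cos θ : ℂ) * Complex.exp (-(α * Complex.I)) := by
    rw [← hpe, map_mul, ← Complex.exp_conj, Complex.conj_ofReal]; simp
  have hrc : (starRingEnd ℂ) r = (Real.sin θ : ℂ) * Complex.exp (-(β * Complex.I)) := by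
    rw [← hre, map_mul, ← Complex.exp_conj, Complex.conj_ofReal]; simp
  have hi : Complex.exp (Real.pi / 2 * Complex.I) = Complex.I := Complex.exp_pi_div_two_mul_I
  have hi' : Complex.exp (-(Real.pi / 2 * Complex.I)) = -Complex.I := by
    rw [Complex.exp_neg, hi, Complex.inv_I]
  refine ⟨γ / 2, β - α + Real.pi / 2, 2 * θ, γ - α - β - Real.pi / 2, ?_⟩
  rw [H_RZ_H]
  have a00 : Complex.exp (α * Complex.I) = Complex.exp (Complex.I * ((γ / 2 : ℝ) : ℂ)) *
      Complex.exp (-(Complex.I * ((β - α + Real.pi / 2 : ℝ) : ℂ) / 2)) *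
      Complex.exp (-(Complex.I * ((γ - α - β - Real.pi / 2 : ℝ) : ℂ) / 2)) := by
    rw [← Complex.exp_add, ← Complex.exp_add]; congr 1; push_cast; ring
  have a11 : Complex.exp (γ * Complex.I) * Complex.exp (-(α * Complex.I)) =
      Complex.exp (Complex.I * ((γ / 2 : ℝ) : ℂ)) *
      Complex.exp ((Complex.I * ((β - α + Real.pi / 2 : ℝ) : ℂ) / 2)) *
      Complex.exp ((Complex.I * ((γ - α - β - Real.pi / 2 : ℝ) : ℂ) / 2)) := by
    rw [← Complex.exp_add, ← Complex.exp_add, ← Complex.exp_add]; congr 1; push_cast; ring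
  have a01 : Complex.exp (γ * Complex.I) * Complex.exp (-(β * Complex.I)) * -Complex.I =
      Complex.exp (Complex.I * ((γ / 2 : ℝ) : ℂ)) *
      Complex.exp (-(Complex.I * ((β - α + Real.pi / 2 : ℝ) : ℂ) / 2)) *
      Complex.exp ((Complex.I * ((γ - α - β - Real.pi / 2 : ℝ) : ℂ) / 2)) := by
    rw [← hi', ← Complex.exp_add, ← Complex.exp_add, ← Complex.exp_add, ← Complex.exp_add]
    congr 1; push_cast; ring
  have a10 : Complex.exp (β * Complex.I) * Complex.I =
      Complex.exp (Complex.I * ((γ / 2 : ℝ) : ℂ)) *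
      Complex.exp ((Complex.I * ((β - α + Real.pi / 2 : ℝ) : ℂ) / 2)) *
      Complex.exp (-(Complex.I * ((γ - α - β - Real.pi / 2 : ℝ) : ℂ) / 2)) := by
    nth_rewrite 2 [← hi]
    rw [← Complex.exp_add, ← Complex.exp_add, ← Complex.exp_add]
    congr 1; push_cast; ring
  have hWe : W = !![p, q; r, t] := by
    rw [hp, hq, hr, ht]; exact Matrix.eta_fin_two W
  rw [hWe, hq', ht', hpc, hrc, ← hpe, ← hre, ← hDe]
  unfold RZ
  generalize Complex.exp (Complex.I * ((γ / 2 : ℝ) : ℂ)) = E0 at *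
  generalize Complex.exp (Complex.I * ((β - α + Real.pi / 2 : ℝ) : ℂ) / 2) = E1 at *
  generalize Complex.exp (-(Complex.I * ((β - α + Real.pi / 2 : ℝ) : ℂ) / 2)) = E2 at *
  generalize Complex.exp (Complex.I * ((γ - α - β - Real.pi / 2 : ℝ) : ℂ) / 2) = E3 at *
  generalize Complex.exp (-(Complex.I * ((γ - α - β - Real.pi / 2 : ℝ) : ℂ) / 2)) = E4 at *
  have hII := Complex.I_mul_I
  ext i j
  fin_cases i <;> fin_cases j <;>
    simp [Matrix.mul_apply, Fin.sum_univ_two, -neg_mul]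
  · linear_combination Complex.cos θ * a00
  · linear_combination (-Complex.I * Complex.sin θ) * a01 - Complex.exp (γ * Complex.I) * Complex.exp (-(β * Complex.I)) * Complex.sin θ * hII
  · linear_combination (-Complex.I * Complex.sin θ) * a10 + Complex.exp (β * Complex.I) * Complex.sin θ * hII
  · linear_combination Complex.cos θ * a11

/-- Every single-qubit unitary equals a product of three J(φ) = H R_Z(φ)
operators up to a global phase. -/
theorem three_J_decomposition (U : Matrix (Fin 2) (Fin 2) ℂ)
    (hU : Uᴴ * U = 1) :
    ∃ δ φ₁ φ₂ φ₃ : ℝ,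
      U = Complex.exp (Complex.I * δ) •
            ((H2 * RZ φ₁) * (H2 * RZ φ₂) * (H2 * RZ φ₃)) := by
  obtain ⟨δ, a, b, c, h⟩ := zxz (H2 * U) (by
    rw [Matrix.conjTranspose_mul, H2_conj, Matrix.mul_assoc, ← Matrix.mul_assoc H2, H2_mul_H2,
      Matrix.one_mul, hU])
  refine ⟨δ, a, b, c, ?_⟩
  have h2 : U = H2 * (H2 * U) := by rw [← Matrix.mul_assoc, H2_mul_H2, Matrix.one_mul]
  rw [h2, h, Matrix.mul_smul]
  simp only [Matrix.mul_assoc]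
end
end
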